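/- Let x₀ ∈ ℝ, σ ∈ (0,√2), and let φ : (−∞,0]×ℝ → ℝ be a classical solution of φ_t = φ_xx + f′(w(x + x₀)) φ satisfying |φ(t,x)| ≤ C e^{σ|x|} for all (t,x) ∈ (−∞,0]×ℝ and some C > 0. Then for every σ̃ ∈ (0,√2) there exists a constant C′ > 0 (depending on C, σ, σ̃) such that |φ(t,x)| ≤ C′ e^{−σ̃|x|} for all (t,x) ∈ (−∞,0]×ℝ. -/

import Mathlib

open Real

noncomputable section

/-- The heteroclinic profile `w(s) = tanh(s/√2)`. -/
def w (s : ℝ) : ℝ := Real.tanh (s / Real.sqrt 2)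

/-- The Allen–Cahn nonlinearity `f(v) = v(1-v²)`. -/
def f (v : ℝ) : ℝ := v * (1 - v ^ 2)

/-- `f'`. -/
def f1 (v : ℝ) : ℝ := deriv f v

/-!
Where `|x|` is large the potential is at most `-θ²`, for any `θ < √2` fixed in advance with
`σ, σ' < θ`. On a half-line `x ≥ R` of this kind and for `τ ≤ t < 0`, the solution lies below
`D * e^{-σ'x} + δ * e^{θx} + C * e^{(θ² - σ²)(τ - t)} * e^{σx}`: these are supersolutions, and one
of them dominates the growth bound on each of the side `x = R`, a far side `x = X` and the initial
line `t = τ`. Only the first term survives as `τ → -∞` and `δ → 0`.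

The solution is only assumed to have pointwise partial derivatives, so that it need not be jointly
continuous, whereas the maximum principle uses upper semicontinuity forward in time. This is
recovered as in the Looman–Menchoff theorem: by Baire's theorem, on a relatively open part of the
set of bad points the solution is uniformly Lipschitz along coordinate lines. The lines through
these points form a grid on which the solution is controlled, and the maximum principle applies
inside each cell of the grid; at the two lower corners of a cell semicontinuity may still fail, but
there heat kernels of small mass absorb the bounded solution.
-/

open Bornology Filter Set Topology

/-- The partial derivatives `v_t`, `v_x`, `v_xx` exist at `(t, x)`, and `v_t - v_xx = q` there.
No joint continuity of `v` or of its derivatives is asked for. -/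
def HasHeatAt (v : ℝ → ℝ → ℝ) (q t x : ℝ) : Prop :=
  ∃ (v' : ℝ → ℝ) (e : ℝ), (∀ᶠ y in 𝓝 x, HasDerivAt (v t) (v' y) y) ∧ HasDerivAt v' e x ∧
    HasDerivAt (fun s => v s x) (e + q) t

/-- Pointwise subsolutions of the heat equation: `v_t ≤ v_xx` at `(t, x)`. -/
def SubcaloricAt (v : ℝ → ℝ → ℝ) (t x : ℝ) : Prop :=
  ∃ q ≤ 0, HasHeatAt v q t x

lemma deriv_deriv_nonpos_of_isLocalMax {g : ℝ → ℝ} {x : ℝ} (hmax : IsLocalMax g x)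
    (hg : ContinuousAt g x) : deriv (deriv g) x ≤ 0 := by
  by_contra! hpos
  have hmin : IsLocalMin g x := isLocalMin_of_deriv_deriv_pos hpos hmax.deriv_eq_zero hg
  have hconst : g =ᶠ[𝓝 x] fun _ => g x := by
    filter_upwards [hmax, hmin] with y hle hge using le_antisymm hle hge
  simp [hconst.deriv.deriv_eq] at hpos

namespace HasHeatAt

variable {u v : ℝ → ℝ → ℝ} {p q t x : ℝ}

lemma continuousAt_space (h : HasHeatAt v q t x) : ContinuousAt (v t) x := by
  obtain ⟨v', e, hx, -, -⟩ := h
  exact hx.self_of_nhds.continuousAt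

lemma continuousAt_time (h : HasHeatAt v q t x) : ContinuousAt (fun s => v s x) t := by
  obtain ⟨v', e, -, -, ht⟩ := h
  exact ht.continuousAt

lemma add (hu : HasHeatAt u p t x) (hv : HasHeatAt v q t x) :
    HasHeatAt (fun s y => u s y + v s y) (p + q) t x := by
  obtain ⟨u', d, hux, huxx, hut⟩ := hu
  obtain ⟨v', e, hvx, hvxx, hvt⟩ := hv
  refine ⟨fun y => u' y + v' y, d + e, ?_, huxx.add hvxx, (hut.add hvt).congr_deriv (by ring)⟩
  filter_upwards [hux, hvx] with y hu hv using hu.add hv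

lemma const_mul (c : ℝ) (hv : HasHeatAt v q t x) :
    HasHeatAt (fun s y => c * v s y) (c * q) t x := by
  obtain ⟨v', e, hvx, hvxx, hvt⟩ := hv
  refine ⟨fun y => c * v' y, c * e, ?_, hvxx.const_mul c, (hvt.const_mul c).congr_deriv (by ring)⟩
  filter_upwards [hvx] with y hy using hy.const_mul c

lemma neg (hv : HasHeatAt v q t x) : HasHeatAt (fun s y => -v s y) (-q) t x := by
  simpa using hv.const_mul (-1)

lemma sub (hu : HasHeatAt u p t x) (hv : HasHeatAt v q t x) :
    HasHeatAt (fun s y => u s y - v s y) (p - q) t x := by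
  simpa only [sub_eq_add_neg] using hu.add hv.neg

lemma comp_neg_space (h : HasHeatAt v q t (-x)) : HasHeatAt (fun s y => v s (-y)) q t x := by
  obtain ⟨v', e, hvx, hvxx, hvt⟩ := h
  refine ⟨fun y => -v' (-y), e, ?_, ?_, hvt⟩
  · filter_upwards [(continuous_neg.tendsto x).eventually hvx] with y hy
    exact (hy.comp y (hasDerivAt_neg y)).congr_deriv (by ring)
  · exact (hvxx.comp x (hasDerivAt_neg x)).neg.congr_deriv (by ring)

lemma exists_hasDerivAt_le_of_isLocalMax (h : HasHeatAt v q t x) (hmax : IsLocalMax (v t) x) :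
    ∃ d ≤ q, HasDerivAt (fun s => v s x) d t := by
  have hcont := h.continuousAt_space
  obtain ⟨v', e, hvx, hvxx, hvt⟩ := h
  have hderiv : deriv (v t) =ᶠ[𝓝 x] v' := by
    filter_upwards [hvx] with y hy using hy.deriv
  have he : e ≤ 0 := by
    rw [← hvxx.deriv, ← hderiv.deriv_eq]
    exact deriv_deriv_nonpos_of_isLocalMax hmax hcont
  exact ⟨e + q, by linarith, hvt⟩

end HasHeatAt

lemma hasHeatAt_const (c t x : ℝ) : HasHeatAt (fun _ _ => c) 0 t x :=
  ⟨fun _ => 0, 0, .of_forall fun y => hasDerivAt_const y c, hasDerivAt_const x 0,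
    by simpa using hasDerivAt_const t c⟩

lemma hasHeatAt_const_mul_time (K t x : ℝ) : HasHeatAt (fun s _ => K * s) K t x :=
  ⟨fun _ => 0, 0, .of_forall fun y => hasDerivAt_const y (K * t), hasDerivAt_const x 0,
    by simpa using (hasDerivAt_id t).const_mul K⟩

lemma hasHeatAt_exp (k m t x : ℝ) :
    HasHeatAt (fun s y => exp (k * y + m * s)) ((m - k ^ 2) * exp (k * x + m * t)) t x := by
  have hspace (y : ℝ) :
      HasDerivAt (fun y => exp (k * y + m * t)) (exp (k * y + m * t) * k) y := by
    simpa using (((hasDerivAt_id y).const_mul k).add_const (m * t)).exp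
  refine ⟨fun y => exp (k * y + m * t) * k, exp (k * x + m * t) * k * k, .of_forall hspace,
    (hspace x).mul_const k, ?_⟩
  exact (((hasDerivAt_id t).const_mul m).const_add (k * x)).exp.congr_deriv
    (by simp only [id]; ring)

lemma hasHeatAt_quadratic (t₀ x₀ t x : ℝ) :
    HasHeatAt (fun s y => (y - x₀) ^ 2 + 2 * (s - t₀)) 0 t x := by
  refine ⟨fun y => 2 * (y - x₀), 2, .of_forall fun y => ?_, ?_, ?_⟩
  · simpa using (((hasDerivAt_id y).sub_const x₀).pow 2).add_const (2 * (t - t₀))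
  · simpa using ((hasDerivAt_id x).sub_const x₀).const_mul 2
  · simpa using (((hasDerivAt_id t).sub_const t₀).const_mul 2).const_add ((x - x₀) ^ 2)

lemma SubcaloricAt.sub_hasHeatAt {u v : ℝ → ℝ → ℝ} {q t x : ℝ} (hu : SubcaloricAt u t x)
    (hv : HasHeatAt v q t x) (hq : 0 ≤ q) : SubcaloricAt (fun s y => u s y - v s y) t x := by
  obtain ⟨p, hp, hup⟩ := hu
  exact ⟨p - q, by linarith, hup.sub hv⟩

lemma SubcaloricAt.continuousAt_space {v : ℝ → ℝ → ℝ} {t x : ℝ} (h : SubcaloricAt v t x) :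
    ContinuousAt (v t) x := by
  obtain ⟨q, -, hq⟩ := h
  exact hq.continuousAt_space

/-- Joint upper semicontinuity of `v` at `(t, x)` as time decreases to `t`. -/
def RightUSCAt (v : ℝ → ℝ → ℝ) (t x : ℝ) : Prop :=
  UpperSemicontinuousWithinAt (fun p : ℝ × ℝ => v p.1 p.2) (Ici t ×ˢ univ) (t, x)

namespace RightUSCAt

variable {u v : ℝ → ℝ → ℝ} {t x : ℝ}

lemma eventually_lt (h : RightUSCAt v t x) {c : ℝ} (hc : v t x < c) :
    ∀ᶠ p in 𝓝[≥] t ×ˢ 𝓝 x, v p.1 p.2 < c := by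
  have := h c hc
  rwa [nhdsWithin_prod_eq, nhdsWithin_univ] at this

lemma add_continuousAt (hu : RightUSCAt u t x)
    (hv : ContinuousAt (fun p : ℝ × ℝ => v p.1 p.2) (t, x)) :
    RightUSCAt (fun s y => u s y + v s y) t x := by
  unfold RightUSCAt at hu ⊢
  exact hu.add hv.continuousWithinAt.upperSemicontinuousWithinAt

lemma sub_continuousAt (hu : RightUSCAt u t x)
    (hv : ContinuousAt (fun p : ℝ × ℝ => v p.1 p.2) (t, x)) :
    RightUSCAt (fun s y => u s y - v s y) t x := by
  simpa only [sub_eq_add_neg] using hu.add_continuousAt hv.neg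

end RightUSCAt

section MaximumPrinciple

variable {v : ℝ → ℝ → ℝ} {τ T α β : ℝ}

lemma eventually_forall_lt_of_rightUSCAt {t c : ℝ} {K : Set ℝ} (hK : IsCompact K)
    (husc : ∀ x ∈ K, RightUSCAt v t x) (hlt : ∀ x ∈ K, v t x < c) :
    ∀ᶠ s in 𝓝[≥] t, ∀ x ∈ K, v s x < c := by
  obtain ⟨A, hA, B, hB, hAB⟩ := mem_prod_iff.1 <|
    hK.mem_prod_nhdsSet_of_forall (l := 𝓝[≥] t) (s := {p : ℝ × ℝ | v p.1 p.2 < c})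
      fun x hx => (husc x hx).eventually_lt (hlt x hx)
  filter_upwards [hA] with s hs x hx
  exact hAB (mk_mem_prod hs (subset_of_mem_nhdsSet hB hx))

lemma exists_isLeast_time_nonneg {K : Set ℝ} (hK : IsCompact K)
    (husc : ∀ t ∈ Icc τ T, ∀ x ∈ K, RightUSCAt v t x)
    (hne : ∃ t ∈ Icc τ T, ∃ x ∈ K, 0 ≤ v t x) :
    ∃ s, IsLeast {t | t ∈ Icc τ T ∧ ∃ x ∈ K, 0 ≤ v t x} s := by
  set A := {t | t ∈ Icc τ T ∧ ∃ x ∈ K, 0 ≤ v t x}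
  have hA : A.Nonempty := hne
  have hglb : IsGLB A (sInf A) := isGLB_csInf hA ⟨τ, fun s hs => hs.1.1⟩
  have hmem : sInf A ∈ Icc τ T :=
    ⟨hglb.2 fun s hs => hs.1.1, (hglb.1 hA.choose_spec).trans hA.choose_spec.1.2⟩
  refine ⟨sInf A, ?_, hglb.1⟩
  by_contra hnot
  have hneg : ∀ x ∈ K, v (sInf A) x < 0 := fun x hx =>
    lt_of_not_ge fun hge => hnot ⟨hmem, x, hx, hge⟩
  obtain ⟨s, ⟨-, x, hx, hge⟩, hlt⟩ := ((hglb.frequently_mem hA).and_eventually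
    (eventually_forall_lt_of_rightUSCAt hK (husc _ hmem) hneg)).exists
  exact (hlt x hx).not_ge hge

lemma eventually_nhdsLT_lt_of_hasDerivAt_neg {g : ℝ → ℝ} {d t : ℝ} (h : HasDerivAt g d t)
    (hd : d < 0) : ∀ᶠ s in 𝓝[<] t, g t < g s := by
  have hslope : ∀ᶠ s in 𝓝[<] t, slope g t s < 0 :=
    ((hasDerivAt_iff_tendsto_slope.1 h).mono_left
      (nhdsWithin_mono _ fun s hs => ne_of_lt hs)).eventually_lt_const hd
  filter_upwards [hslope, self_mem_nhdsWithin] with s hs hst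
  rwa [slope_comm, slope_neg_iff_of_le (le_of_lt hst)] at hs

/-- At the first time when `v` reaches `0`, it does so at an interior maximum in space, where
`v_t < 0`: it was positive earlier. -/
theorem neg_of_parabolic_boundary_of_strict
    (hcont : ∀ t ∈ Icc τ T, ContinuousOn (v t) (Icc α β))
    (husc : ∀ t ∈ Icc τ T, ∀ x ∈ Icc α β, RightUSCAt v t x)
    (hside : ∀ t ∈ Icc τ T, v t α < 0 ∧ v t β < 0)
    (hinit : ∀ x ∈ Icc α β, v τ x < 0)
    (hheat : ∀ t ∈ Icc τ T, ∀ x ∈ Ioo α β, 0 ≤ v t x → ∃ q < 0, HasHeatAt v q t x) :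
    ∀ t ∈ Icc τ T, ∀ x ∈ Icc α β, v t x < 0 := by
  by_contra! hne
  obtain ⟨s, ⟨hs, x, hx, hvx⟩, hleast⟩ := exists_isLeast_time_nonneg isCompact_Icc husc hne
  obtain ⟨y, hy, hymax⟩ := isCompact_Icc.exists_isMaxOn ⟨x, hx⟩ (hcont s hs)
  have hvy : 0 ≤ v s y := hvx.trans (hymax hx)
  have hτs : τ < s := hs.1.lt_of_ne (by rintro rfl; exact (hinit y hy).not_ge hvy)
  have hyα : α < y := hy.1.lt_of_ne (by rintro rfl; exact (hside s hs).1.not_ge hvy)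
  have hyβ : y < β := hy.2.lt_of_ne (by rintro rfl; exact (hside s hs).2.not_ge hvy)
  obtain ⟨q, hq, hvq⟩ := hheat s hs y ⟨hyα, hyβ⟩ hvy
  obtain ⟨d, hd, hder⟩ := hvq.exists_hasDerivAt_le_of_isLocalMax
    (hymax.isLocalMax (Icc_mem_nhds hyα hyβ))
  obtain ⟨r, hr, hτr, hrs⟩ := ((eventually_nhdsLT_lt_of_hasDerivAt_neg hder
    (hd.trans_lt hq)).and (Ioo_mem_nhdsLT hτs)).exists
  exact hrs.not_ge (hleast ⟨⟨hτr.le, hrs.le.trans hs.2⟩, y, hy, hvy.trans hr.le⟩)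

theorem nonpos_of_parabolic_boundary
    (hcont : ∀ t ∈ Icc τ T, ContinuousOn (v t) (Icc α β))
    (husc : ∀ t ∈ Icc τ T, ∀ x ∈ Icc α β, RightUSCAt v t x)
    (hside : ∀ t ∈ Icc τ T, v t α ≤ 0 ∧ v t β ≤ 0)
    (hinit : ∀ x ∈ Icc α β, v τ x ≤ 0)
    (hsub : ∀ t ∈ Icc τ T, ∀ x ∈ Ioo α β, 0 < v t x → SubcaloricAt v t x) :
    ∀ t ∈ Icc τ T, ∀ x ∈ Icc α β, v t x ≤ 0 := by
  have hstrict : ∀ ε > 0, ∀ t ∈ Icc τ T, ∀ x ∈ Icc α β, v t x - (ε * t + ε * (1 - τ)) < 0 := by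
    intro ε hε
    have hshift : ∀ t, τ ≤ t → 0 < ε * t + ε * (1 - τ) := fun t ht => by nlinarith
    refine neg_of_parabolic_boundary_of_strict (fun t ht => (hcont t ht).sub continuousOn_const)
      (fun t ht x hx => (husc t ht x hx).sub_continuousAt (by fun_prop)) (fun t ht => ?_)
      (fun x hx => ?_) (fun t ht x hx hv => ?_)
    · constructor <;> linarith [hside t ht, hshift t ht.1]
    · linarith [hinit x hx, hshift τ le_rfl]
    · obtain ⟨q, hq, hvq⟩ := hsub t ht x hx (by linarith [hshift t ht.1])
      exact ⟨_, by linarith, hvq.sub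
        ((hasHeatAt_const_mul_time ε t x).add (hasHeatAt_const (ε * (1 - τ)) t x))⟩
  intro t ht x hx
  have hlim : Tendsto (fun ε : ℝ => ε * t + ε * (1 - τ)) (𝓝[>] 0) (𝓝 0) :=
    tendsto_nhdsWithin_of_tendsto_nhds (Continuous.tendsto' (by fun_prop) _ _ (by simp))
  refine ge_of_tendsto hlim ?_
  filter_upwards [self_mem_nhdsWithin] with ε hε
  linarith [hstrict ε hε t ht x hx]

end MaximumPrinciple

/-- The heat kernel with pole at `(r, c)`, without the factor `1 / √(4π)`. It is meant for
`r < t`. -/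
def gaussKernel (r c t x : ℝ) : ℝ :=
  exp (-(x - c) ^ 2 / (4 * (t - r))) / √(t - r)

section GaussKernel

variable {r c t x : ℝ}

lemma gaussKernel_nonneg : 0 ≤ gaussKernel r c t x := by
  unfold gaussKernel
  positivity

lemma gaussKernel_le {h : ℝ} (hh : 0 < h) (ht : h ≤ t - r) : gaussKernel r c t x ≤ 1 / √h := by
  refine div_le_div₀ zero_le_one (exp_le_one_iff.2 ?_) (sqrt_pos.2 hh) (sqrt_le_sqrt ht)
  exact div_nonpos_of_nonpos_of_nonneg (neg_nonpos.2 (sq_nonneg _)) (by linarith)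

lemma half_le_mul_gaussKernel {ε : ℝ} (hε : 0 < ε) (hx : |x - c| ≤ ε) :
    1 / 2 ≤ ε * gaussKernel (r - ε ^ 2) c r x := by
  have hexponent : -(1 / 4) ≤ -(x - c) ^ 2 / (4 * ε ^ 2) := by
    rw [le_div_iff₀ (by positivity)]
    linarith [sq_le_sq.2 (hx.trans (le_abs_self ε))]
  have hkernel : ε * gaussKernel (r - ε ^ 2) c r x = exp (-(x - c) ^ 2 / (4 * ε ^ 2)) := by
    rw [gaussKernel, sub_sub_cancel, sqrt_sq hε.le]
    field_simp
  rw [hkernel]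
  linarith [add_one_le_exp (-(x - c) ^ 2 / (4 * ε ^ 2))]

lemma continuousAt_gaussKernel (h : r < t) :
    ContinuousAt (fun p : ℝ × ℝ => gaussKernel r c p.1 p.2) (t, x) := by
  have hpos : 0 < t - r := sub_pos.2 h
  have hden : 4 * (t - r) ≠ 0 := (mul_pos four_pos hpos).ne'
  have hsqrt : √(t - r) ≠ 0 := (sqrt_pos.2 hpos).ne'
  unfold gaussKernel
  fun_prop (disch := assumption)

lemma hasHeatAt_gaussKernel (h : r < t) : HasHeatAt (gaussKernel r c) 0 t x := by
  have hr : 0 < t - r := sub_pos.2 h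
  have hspace (y : ℝ) : HasDerivAt (gaussKernel r c t)
      (gaussKernel r c t y * (-(y - c) / (2 * (t - r)))) y := by
    have hexponent : HasDerivAt (fun y => -(y - c) ^ 2 / (4 * (t - r)))
        (-(y - c) / (2 * (t - r))) y :=
      ((((hasDerivAt_id y).sub_const c).fun_pow 2).neg.div_const _).congr_deriv (by
        simp only [id]; field_simp; norm_num; ring)
    exact (hexponent.exp.div_const √(t - r)).congr_deriv (by unfold gaussKernel; ring)
  have hspace' : HasDerivAt (fun y => -(y - c) / (2 * (t - r))) (-1 / (2 * (t - r))) x :=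
    ((hasDerivAt_id x).sub_const c).neg.div_const _
  refine ⟨_, _, .of_forall hspace, (hspace x).mul hspace', ?_⟩
  have hsub : HasDerivAt (fun s => s - r) 1 t := (hasDerivAt_id t).sub_const r
  have hexponent : HasDerivAt (fun s => -(x - c) ^ 2 / (4 * (s - r)))
      ((x - c) ^ 2 / (4 * (t - r) ^ 2)) t :=
    ((hasDerivAt_const t (-(x - c) ^ 2)).fun_div (hsub.const_mul 4) (by positivity)).congr_deriv
      (by field_simp; ring)
  refine (hexponent.exp.fun_div (hsub.sqrt hr.ne') (by positivity)).congr_deriv ?_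
  have hsq : √(t - r) ^ 2 = t - r := sq_sqrt hr.le
  unfold gaussKernel
  field_simp
  rw [hsq]
  field_simp
  ring

end GaussKernel

section Corners

variable {v : ℝ → ℝ → ℝ} {a b c d r T τ α β ε M : ℝ}

theorem le_add_gaussKernels_of_le_on_slice (hε : 0 < ε) (hM : 0 ≤ M)
    (hsub : ∀ t ∈ Icc r T, ∀ x ∈ Icc α β, SubcaloricAt v t x)
    (husc : ∀ t ∈ Icc r T, ∀ x ∈ Icc α β, RightUSCAt v t x)
    (hside : ∀ t ∈ Icc r T, v t α ≤ 0 ∧ v t β ≤ 0)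
    (hslice : ∀ x ∈ Icc α β, v r x ≤ M)
    (hmiddle : ∀ x ∈ Icc (α + ε) (β - ε), v r x ≤ ε) :
    ∀ t ∈ Icc r T, ∀ x ∈ Icc α β, v t x ≤
      ε + 2 * M * ε * (gaussKernel (r - ε ^ 2) α t x + gaussKernel (r - ε ^ 2) β t x) := by
  set B : ℝ → ℝ → ℝ := fun t x =>
    ε + 2 * M * ε * (gaussKernel (r - ε ^ 2) α t x + gaussKernel (r - ε ^ 2) β t x)
  have hpole : ∀ t ∈ Icc r T, r - ε ^ 2 < t := fun t ht => by nlinarith [ht.1]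
  have hB : ∀ t ∈ Icc r T, ∀ x, HasHeatAt B 0 t x := fun t ht x => by
    simpa using (hasHeatAt_const ε t x).add (((hasHeatAt_gaussKernel (hpole t ht)).add
      (hasHeatAt_gaussKernel (hpole t ht))).const_mul (2 * M * ε))
  have hBcont : ∀ t ∈ Icc r T, ∀ x, ContinuousAt (fun p : ℝ × ℝ => B p.1 p.2) (t, x) :=
    fun t ht x => (((continuousAt_gaussKernel (hpole t ht)).add
      (continuousAt_gaussKernel (hpole t ht))).const_mul _).const_add _
  have hεB (t x : ℝ) : ε ≤ B t x :=
    le_add_of_nonneg_right (mul_nonneg (by positivity)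
      (add_nonneg gaussKernel_nonneg gaussKernel_nonneg))
  have hMB (x : ℝ) (hx : |x - α| ≤ ε ∨ |x - β| ≤ ε) : M ≤ B r x := by
    have hα : 0 ≤ gaussKernel (r - ε ^ 2) α r x := gaussKernel_nonneg
    have hβ : 0 ≤ gaussKernel (r - ε ^ 2) β r x := gaussKernel_nonneg
    have hhalf : 1 / 2 ≤
        ε * (gaussKernel (r - ε ^ 2) α r x + gaussKernel (r - ε ^ 2) β r x) := by
      rcases hx with hx | hx <;>
        nlinarith [half_le_mul_gaussKernel (r := r) hε hx]
    simp only [B]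
    nlinarith
  have hinit : ∀ x ∈ Icc α β, v r x ≤ B r x := fun x hx => by
    rcases le_total x (α + ε) with hxα | hxα
    · exact (hslice x hx).trans (hMB x (.inl (abs_le.2 ⟨by linarith [hx.1], by linarith⟩)))
    rcases le_total (β - ε) x with hxβ | hxβ
    · exact (hslice x hx).trans (hMB x (.inr (abs_le.2 ⟨by linarith, by linarith [hx.2]⟩)))
    · exact (hmiddle x ⟨hxα, hxβ⟩).trans (hεB r x)
  have hdiff (t : ℝ) (ht : t ∈ Icc r T) (x : ℝ) (hx : x ∈ Icc α β) :
      SubcaloricAt (fun s y => v s y - B s y) t x :=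
    (hsub t ht x hx).sub_hasHeatAt (hB t ht x) le_rfl
  intro t ht x hx
  refine sub_nonpos.1 (nonpos_of_parabolic_boundary (v := fun s y => v s y - B s y)
    (fun s hs y hy => (hdiff s hs y hy).continuousAt_space.continuousWithinAt)
    (fun s hs y hy => (husc s hs y hy).sub_continuousAt (hBcont s hs y))
    (fun s hs => ?_) (fun y hy => sub_nonpos.2 (hinit y hy))
    (fun s hs y hy _ => hdiff s hs y (Ioo_subset_Icc_self hy)) t ht x hx)
  constructor <;> linarith [hside s hs, hεB s α, hεB s β]

/-- Boundedness replaces semicontinuity at the two lower corners: the mass of size `M * ε` that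
may sit near a corner spreads out and disappears as `ε → 0`. -/
theorem nonpos_of_corners (hτT : τ < T)
    (hsub : ∀ t ∈ Ioc τ T, ∀ x ∈ Icc α β, SubcaloricAt v t x)
    (husc : ∀ t ∈ Icc τ T, ∀ x ∈ Icc α β, τ < t ∨ x ∈ Ioo α β → RightUSCAt v t x)
    (hM : ∀ t ∈ Icc τ T, ∀ x ∈ Icc α β, v t x ≤ M)
    (hside : ∀ t ∈ Icc τ T, v t α ≤ 0 ∧ v t β ≤ 0)
    (hinit : ∀ x ∈ Icc α β, v τ x ≤ 0) :
    ∀ x ∈ Icc α β, v T x ≤ 0 := by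
  intro x hx
  set N := max M 0
  set Q := 1 / √((T - τ) / 2)
  have hN : 0 ≤ N := le_max_right _ _
  have hbound : ∀ ε > 0, v T x ≤ ε + 2 * N * ε * (Q + Q) := by
    intro ε hε
    have hmiddle : ∀ᶠ s in 𝓝[≥] τ, ∀ y ∈ Icc (α + ε) (β - ε), v s y < ε := by
      have hIoo : Icc (α + ε) (β - ε) ⊆ Ioo α β :=
        Icc_subset_Ioo (by linarith) (by linarith)
      exact eventually_forall_lt_of_rightUSCAt isCompact_Icc
        (fun y hy => husc τ (left_mem_Icc.2 hτT.le) y (Ioo_subset_Icc_self (hIoo hy))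
          (.inr (hIoo hy)))
        fun y hy => (hinit y (Ioo_subset_Icc_self (hIoo hy))).trans_lt hε
    obtain ⟨r, hr, hτr, hrT⟩ := ((hmiddle.filter_mono (nhdsWithin_mono _ Ioi_subset_Ici_self)).and
      (Ioo_mem_nhdsGT (show τ < (τ + T) / 2 by linarith))).exists
    have hIcc : Icc r T ⊆ Icc τ T := Icc_subset_Icc_left hτr.le
    have hrT' : r ≤ T := by linarith
    have hQ (c : ℝ) : gaussKernel (r - ε ^ 2) c T x ≤ Q :=
      gaussKernel_le (by linarith) (by nlinarith)
    refine (le_add_gaussKernels_of_le_on_slice hε hN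
      (fun t ht => hsub t ⟨hτr.trans_le ht.1, ht.2⟩)
      (fun t ht y hy => husc t (hIcc ht) y hy (.inl (hτr.trans_le ht.1)))
      (fun t ht => hside t (hIcc ht))
      (fun y hy => (hM r ⟨hτr.le, hrT'⟩ y hy).trans (le_max_left _ _))
      (fun y hy => (hr y hy).le) T ⟨hrT', le_rfl⟩ x hx).trans ?_
    gcongr <;> exact hQ _
  have hlim : Tendsto (fun ε : ℝ => ε + 2 * N * ε * (Q + Q)) (𝓝[>] 0) (𝓝 0) :=
    tendsto_nhdsWithin_of_tendsto_nhds (Continuous.tendsto' (by fun_prop) _ _ (by simp))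
  exact ge_of_tendsto hlim (eventually_mem_nhdsWithin.mono hbound)

/-- Every point off the grid lies in a rectangle whose sides are grid lines and whose interior
avoids the grid, so semicontinuity can fail only at the corners of that rectangle. -/
theorem nonpos_of_nonpos_on_grid {P Y : Set ℝ} (hP : IsClosed P) (hY : IsClosed Y)
    (ha : a ∈ P) (hc : c ∈ Y) (hd : d ∈ Y)
    (hsub : ∀ t ∈ Icc a b, ∀ x ∈ Icc c d, SubcaloricAt v t x)
    (husc : ∀ t ∈ Icc a b, ∀ x ∈ Icc c d, t ∉ P ∨ x ∉ Y → RightUSCAt v t x)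
    (hM : ∀ t ∈ Icc a b, ∀ x ∈ Icc c d, v t x ≤ M)
    (hvP : ∀ t ∈ Icc a b ∩ P, ∀ x ∈ Icc c d, v t x ≤ 0)
    (hvY : ∀ t ∈ Icc a b, ∀ x ∈ Icc c d ∩ Y, v t x ≤ 0) :
    ∀ t ∈ Icc a b, ∀ x ∈ Icc c d, v t x ≤ 0 := by
  intro t ht x hx
  by_cases htP : t ∈ P
  · exact hvP t ⟨ht, htP⟩ x hx
  obtain ⟨τ, ⟨hτP, hτt⟩, hτ⟩ : ∃ τ, IsGreatest (P ∩ Iic t) τ :=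
    ⟨_, (hP.inter isClosed_Iic).isGreatest_csSup ⟨a, ha, ht.1⟩ ⟨t, fun _ h => h.2⟩⟩
  obtain ⟨α, ⟨hαY, hαx⟩, hα⟩ : ∃ α, IsGreatest (Y ∩ Iic x) α :=
    ⟨_, (hY.inter isClosed_Iic).isGreatest_csSup ⟨c, hc, hx.1⟩ ⟨x, fun _ h => h.2⟩⟩
  obtain ⟨β, ⟨hβY, hxβ⟩, hβ⟩ : ∃ β, IsLeast (Y ∩ Ici x) β :=
    ⟨_, (hY.inter isClosed_Ici).isLeast_csInf ⟨d, hd, hx.2⟩ ⟨x, fun _ h => h.2⟩⟩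
  have hτt' : τ < t := hτt.lt_of_ne (by rintro rfl; exact htP hτP)
  have hI : Icc τ t ⊆ Icc a b := Icc_subset_Icc (hτ ⟨ha, ht.1⟩) ht.2
  have hJ : Icc α β ⊆ Icc c d := Icc_subset_Icc (hα ⟨hc, hx.1⟩) (hβ ⟨hd, hx.2⟩)
  have hτI : τ ∈ Icc τ t := left_mem_Icc.2 hτt
  have hαβ : α ≤ β := hαx.trans hxβ
  have hoffP : ∀ s ∈ Ioc τ t, s ∉ P := fun s hs hsP => (hτ ⟨hsP, hs.2⟩).not_gt hs.1
  have hoffY : ∀ y ∈ Ioo α β, y ∉ Y := fun y hy hyY =>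
    (le_total y x).elim (fun hyx => (hα ⟨hyY, hyx⟩).not_gt hy.1)
      fun hxy => (hβ ⟨hyY, hxy⟩).not_gt hy.2
  refine nonpos_of_corners hτt' (fun s hs y hy => hsub s (hI (Ioc_subset_Icc_self hs)) y (hJ hy))
    (fun s hs y hy hsy => husc s (hI hs) y (hJ hy) ?_)
    (fun s hs y hy => hM s (hI hs) y (hJ hy))
    (fun s hs => ⟨hvY s (hI hs) α ⟨hJ (left_mem_Icc.2 hαβ), hαY⟩,
      hvY s (hI hs) β ⟨hJ (right_mem_Icc.2 hαβ), hβY⟩⟩)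
    (fun y hy => hvP τ ⟨hI hτI, hτP⟩ y (hJ hy)) x ⟨hαx, hxβ⟩
  exact hsy.imp (fun hτs => hoffP s ⟨hτs, hs.2⟩) (hoffY y)

end Corners

/-- The points `p` through which `u` is `L`-Lipschitz with respect to `p` along both coordinate
lines, inside `Ω` and up to distance `1 / L`. -/
def lipCross (u : ℝ → ℝ → ℝ) (Ω : Set (ℝ × ℝ)) (L : ℝ) : Set (ℝ × ℝ) :=
  {p | (∀ s, (s, p.2) ∈ Ω → |s - p.1| < 1 / L → |u s p.2 - u p.1 p.2| ≤ L * |s - p.1|) ∧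
    (∀ y, (p.1, y) ∈ Ω → |y - p.2| < 1 / L → |u p.1 y - u p.1 p.2| ≤ L * |y - p.2|)}

section LipCross

variable {u : ℝ → ℝ → ℝ} {Ω U : Set (ℝ × ℝ)} {L : ℝ} {p : ℝ × ℝ}

lemma lipCross_anti (h : U ⊆ Ω) : lipCross u Ω L ⊆ lipCross u U L :=
  fun _ hp => ⟨fun s hs => hp.1 s (h hs), fun y hy => hp.2 y (h hy)⟩

lemma tendsto_nhdsWithin_lipCross (hL : 0 < L) (hΩ : Ω ∈ 𝓝 p)
    (hspace : ContinuousAt (u p.1) p.2) :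
    Tendsto (fun z : ℝ × ℝ => u z.1 z.2) (𝓝[lipCross u Ω L] p) (𝓝 (u p.1 p.2)) := by
  have hfst : Tendsto Prod.fst (𝓝[lipCross u Ω L] p) (𝓝 p.1) :=
    continuousAt_fst.mono_left nhdsWithin_le_nhds
  have hsnd : Tendsto Prod.snd (𝓝[lipCross u Ω L] p) (𝓝 p.2) :=
    continuousAt_snd.mono_left nhdsWithin_le_nhds
  have hdist : Tendsto (fun z : ℝ × ℝ => |p.1 - z.1|) (𝓝[lipCross u Ω L] p) (𝓝 0) := by
    simpa using (hfst.const_sub p.1).abs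
  have hline : ∀ᶠ z in 𝓝[lipCross u Ω L] p, (p.1, z.2) ∈ Ω :=
    (tendsto_const_nhds.prodMk_nhds hsnd).eventually hΩ
  have hdiff : Tendsto (fun z : ℝ × ℝ => u p.1 z.2 - u z.1 z.2)
      (𝓝[lipCross u Ω L] p) (𝓝 0) := by
    refine squeeze_zero_norm' ?_ (by simpa using hdist.const_mul L)
    filter_upwards [self_mem_nhdsWithin, hline, hdist.eventually_lt_const (one_div_pos.2 hL)]
      with z hz hzΩ hzL using hz.1 p.1 hzΩ hzL
  simpa using (hspace.tendsto.comp hsnd).sub hdiff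

lemma mem_lipCross_of_mem_closure (hL : 0 < L) (hΩ : IsOpen Ω)
    (hspace : ∀ p ∈ Ω, ContinuousAt (u p.1) p.2)
    (htime : ∀ p ∈ Ω, ContinuousAt (fun s => u s p.2) p.1) (hp : p ∈ Ω)
    (hcl : p ∈ closure (lipCross u Ω L)) : p ∈ lipCross u Ω L := by
  have : (𝓝[lipCross u Ω L] p).NeBot := mem_closure_iff_nhdsWithin_neBot.1 hcl
  have hu := tendsto_nhdsWithin_lipCross hL (hΩ.mem_nhds hp) (hspace p hp)
  have hfst : Tendsto Prod.fst (𝓝[lipCross u Ω L] p) (𝓝 p.1) :=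
    continuousAt_fst.mono_left nhdsWithin_le_nhds
  have hsnd : Tendsto Prod.snd (𝓝[lipCross u Ω L] p) (𝓝 p.2) :=
    continuousAt_snd.mono_left nhdsWithin_le_nhds
  constructor
  · intro s hs hsL
    have hdist := (hfst.const_sub s).abs
    have hline := (tendsto_const_nhds.prodMk_nhds hsnd).eventually (hΩ.mem_nhds hs)
    refine le_of_tendsto_of_tendsto (((hspace _ hs).tendsto.comp hsnd).sub hu).abs
      (hdist.const_mul L) ?_
    filter_upwards [self_mem_nhdsWithin, hline, hdist.eventually_lt_const hsL]
      with z hz using hz.1 s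
  · intro y hy hyL
    have hdist := (hsnd.const_sub y).abs
    have hline := (hfst.prodMk_nhds tendsto_const_nhds).eventually (hΩ.mem_nhds hy)
    refine le_of_tendsto_of_tendsto (((htime _ hy).tendsto.comp hfst).sub hu).abs
      (hdist.const_mul L) ?_
    filter_upwards [self_mem_nhdsWithin, hline, hdist.eventually_lt_const hyL]
      with z hz using hz.2 y

lemma eventually_lipschitz_of_hasDerivAt {g : ℝ → ℝ} {d x : ℝ} (h : HasDerivAt g d x) :
    ∀ᶠ L in atTop, ∀ y, |y - x| < 1 / L → |g y - g x| ≤ L * |y - x| := by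
  obtain ⟨c, hc⟩ := h.isBigO_sub.bound
  obtain ⟨δ, hδ, hball⟩ := Metric.eventually_nhds_iff.1 hc
  filter_upwards [eventually_ge_atTop c, eventually_ge_atTop (1 / δ)] with L hcL hδL y hy
  have hyδ : |y - x| < δ := hy.trans_le
    ((one_div_le ((one_div_pos.2 hδ).trans_le hδL) hδ).2 hδL)
  exact (hball hyδ).trans (mul_le_mul_of_nonneg_right hcL (abs_nonneg _))

lemma HasHeatAt.eventually_mem_lipCross {q : ℝ} (h : HasHeatAt u q p.1 p.2) (Ω : Set (ℝ × ℝ)) :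
    ∀ᶠ L in atTop, p ∈ lipCross u Ω L := by
  obtain ⟨u', e, hux, -, hut⟩ := h
  filter_upwards [eventually_lipschitz_of_hasDerivAt hut,
    eventually_lipschitz_of_hasDerivAt hux.self_of_nhds] with L htime hspace
  exact ⟨fun s _ => htime s, fun y _ => hspace y⟩

section Rectangle

variable {t₀ x₀ ρ b M : ℝ}

lemma le_on_cross_of_mem_lipCross (hL : 0 < L) (hρ : 2 * ρ < 1 / L)
    (hp : p ∈ Icc t₀ (t₀ + ρ) ×ˢ Icc (x₀ - ρ) (x₀ + ρ))
    (hpL : p ∈ lipCross u (Icc t₀ (t₀ + ρ) ×ˢ Icc (x₀ - ρ) (x₀ + ρ)) L) (hb : u t₀ p.2 ≤ b) :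
    (∀ t ∈ Icc t₀ (t₀ + ρ), u t p.2 ≤ b + 3 * L * ρ) ∧
      ∀ x ∈ Icc (x₀ - ρ) (x₀ + ρ), u p.1 x ≤ b + 3 * L * ρ := by
  obtain ⟨s, y⟩ := p
  obtain ⟨hs : s ∈ Icc _ _, hy : y ∈ Icc _ _⟩ := hp
  have hρ0 : 0 ≤ ρ := by linarith [hs.1, hs.2]
  have hcol : ∀ t ∈ Icc t₀ (t₀ + ρ), |u t y - u s y| ≤ L * ρ := fun t ht => by
    have hts : |t - s| ≤ ρ := abs_le.2 ⟨by linarith [ht.1, hs.2], by linarith [ht.2, hs.1]⟩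
    exact (hpL.1 t ⟨ht, hy⟩ (by change |t - s| < _; linarith)).trans (by gcongr)
  have hrow : ∀ x ∈ Icc (x₀ - ρ) (x₀ + ρ), |u s x - u s y| ≤ L * (2 * ρ) := fun x hx => by
    have hxy : |x - y| ≤ 2 * ρ :=
      abs_le.2 ⟨by linarith [hx.1, hy.2], by linarith [hx.2, hy.1]⟩
    exact (hpL.2 x ⟨hs, hx⟩ (by change |x - y| < _; linarith)).trans (by gcongr)
  have hLρ : 0 ≤ L * ρ := by positivity
  have hs₀ : u s y ≤ b + L * ρ := by
    linarith [(abs_le.1 (hcol t₀ ⟨le_rfl, by linarith⟩)).1]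
  exact ⟨fun t ht => by linarith [(abs_le.1 (hcol t ht)).2],
    fun x hx => by linarith [(abs_le.1 (hrow x hx)).2]⟩

/-- The coordinate lines through the points of `Z` form a grid on which `u ≤ b + 3 * L * ρ`. -/
lemma le_add_quadratic_of_subset_lipCross {Z : Set (ℝ × ℝ)} (hL : 0 < L) (hρ : 0 < ρ)
    (hρL : 2 * ρ < 1 / L) (hM : 0 ≤ M) (hZ : IsClosed Z) (h₀ : (t₀, x₀) ∈ Z)
    (hZL : Icc t₀ (t₀ + ρ) ×ˢ Icc (x₀ - ρ) (x₀ + ρ) ∩ Z ⊆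
      lipCross u (Icc t₀ (t₀ + ρ) ×ˢ Icc (x₀ - ρ) (x₀ + ρ)) L)
    (hsub : ∀ t ∈ Icc t₀ (t₀ + ρ), ∀ x ∈ Icc (x₀ - ρ) (x₀ + ρ), SubcaloricAt u t x)
    (husc : ∀ t ∈ Icc t₀ (t₀ + ρ), ∀ x ∈ Icc (x₀ - ρ) (x₀ + ρ), (t, x) ∉ Z → RightUSCAt u t x)
    (huM : ∀ t ∈ Icc t₀ (t₀ + ρ), ∀ x ∈ Icc (x₀ - ρ) (x₀ + ρ), u t x ≤ b + M)
    (hbot : ∀ x ∈ Icc (x₀ - ρ) (x₀ + ρ), u t₀ x ≤ b) :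
    ∀ t ∈ Icc t₀ (t₀ + ρ), ∀ x ∈ Icc (x₀ - ρ) (x₀ + ρ),
      u t x ≤ b + 3 * L * ρ + M / ρ ^ 2 * ((x - x₀) ^ 2 + 2 * (t - t₀)) := by
  set I := Icc t₀ (t₀ + ρ)
  set J := Icc (x₀ - ρ) (x₀ + ρ)
  set K := M / ρ ^ 2
  have hLρ : 0 < L * ρ := by positivity
  have hquad : ∀ t ∈ I, ∀ x, K * (x - x₀) ^ 2 ≤ K * ((x - x₀) ^ 2 + 2 * (t - t₀)) :=
    fun t ht x => mul_le_mul_of_nonneg_left (by linarith [ht.1]) (by positivity)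
  have hK (x : ℝ) : 0 ≤ K * (x - x₀) ^ 2 := by positivity
  have hcross : ∀ p ∈ I ×ˢ J ∩ Z, (∀ t ∈ I, u t p.2 ≤ b + 3 * L * ρ) ∧
      ∀ x ∈ J, u p.1 x ≤ b + 3 * L * ρ := fun p hp =>
    le_on_cross_of_mem_lipCross hL hρL hp.1 (hZL hp) (hbot p.2 hp.1.2)
  have hside : ∀ t ∈ I, ∀ x ∈ J, (x - x₀) ^ 2 = ρ ^ 2 →
      u t x ≤ b + 3 * L * ρ + K * ((x - x₀) ^ 2 + 2 * (t - t₀)) := fun t ht x hx hxρ => by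
    have hKM : K * (x - x₀) ^ 2 = M := by rw [hxρ]; exact div_mul_cancel₀ M (by positivity)
    linarith [huM t ht x hx, hquad t ht x]
  have hcomp : IsCompact (I ×ˢ J ∩ Z) := (isCompact_Icc.prod isCompact_Icc).inter_right hZ
  have h₀R : (t₀, x₀) ∈ I ×ˢ J ∩ Z :=
    ⟨⟨⟨le_rfl, by linarith⟩, ⟨by linarith, by linarith⟩⟩, h₀⟩
  intro t ht x hx
  refine sub_nonpos.1 (nonpos_of_nonpos_on_grid (M := M)
    (v := fun t x => u t x - (b + 3 * L * ρ + K * ((x - x₀) ^ 2 + 2 * (t - t₀))))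
    (hcomp.image continuous_fst).isClosed
    ((hcomp.image continuous_snd).isClosed.union (toFinite {x₀ - ρ, x₀ + ρ}).isClosed)
    ⟨_, h₀R, rfl⟩ (.inr (by simp)) (.inr (by simp)) (fun s hs y hy => ?_)
    (fun s hs y hy hsy => ?_) (fun s hs y hy => ?_) ?_ ?_ t ht x hx)
  · exact (hsub s hs y hy).sub_hasHeatAt ((hasHeatAt_const (b + 3 * L * ρ) s y).add
      ((hasHeatAt_quadratic t₀ x₀ s y).const_mul K)) (by simp)
  · refine (husc s hs y hy fun hZ => ?_).sub_continuousAt (by fun_prop)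
    exact hsy.elim (· ⟨_, ⟨⟨hs, hy⟩, hZ⟩, rfl⟩) (· (.inl ⟨_, ⟨⟨hs, hy⟩, hZ⟩, rfl⟩))
  · linarith [huM s hs y hy, hquad s hs y, hK y]
  · rintro _ ⟨hs, p, hp, rfl⟩ y hy
    linarith [(hcross p hp).2 y hy, hquad p.1 hs y, hK y]
  · rintro s hs y ⟨hy, ⟨p, hp, rfl⟩ | rfl | rfl⟩
    · linarith [(hcross p hp).1 s hs, hquad s hs p.2, hK p.2]
    · linarith [hside s hs _ hy (by ring)]
    · linarith [hside s hs _ hy (by ring)]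

end Rectangle

lemma exists_rectangle_subset {s : Set (ℝ × ℝ)} {t₀ x₀ δ : ℝ} (hs : s ∈ 𝓝 (t₀, x₀))
    (hδ : 0 < δ) :
    ∃ ρ, 0 < ρ ∧ ρ < δ ∧ Icc t₀ (t₀ + ρ) ×ˢ Icc (x₀ - ρ) (x₀ + ρ) ⊆ s := by
  obtain ⟨ρ, hball, hρ, hρδ⟩ := (((eventually_closedBall_subset hs).filter_mono
    nhdsWithin_le_nhds).and (Ioo_mem_nhdsGT hδ)).exists
  refine ⟨ρ, hρ, hρδ, Subset.trans ?_ hball⟩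
  rw [← closedBall_prod_same, Real.closedBall_eq_Icc, Real.closedBall_eq_Icc]
  exact prod_mono (Icc_subset_Icc_left (by linarith)) Subset.rfl

lemma rightUSCAt_of_subset_lipCross {Z : Set (ℝ × ℝ)} (hL : 0 < L) (hU : IsOpen U)
    (hsub : ∀ p ∈ U, SubcaloricAt u p.1 p.2) (hZ : IsClosed Z) (hZL : U ∩ Z ⊆ lipCross u U L)
    (husc : ∀ p ∈ U, p ∉ Z → RightUSCAt u p.1 p.2) (hp : p ∈ U ∩ Z)
    (hbdd : IsBoundedUnder (· ≤ ·) (𝓝 p) fun z : ℝ × ℝ => u z.1 z.2) :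
    RightUSCAt u p.1 p.2 := by
  obtain ⟨t₀, x₀⟩ := p
  obtain ⟨N, hN⟩ := hbdd.eventually_le
  intro c (hc : u t₀ x₀ < c)
  set η := (c - u t₀ x₀) / 3
  have hη : 0 < η := by simp only [η]; linarith
  set b := u t₀ x₀ + η
  have hbot : ∀ᶠ z : ℝ × ℝ in 𝓝 (t₀, x₀), u t₀ z.2 < b :=
    ((hsub _ hp.1).continuousAt_space.tendsto.comp continuousAt_snd).eventually_lt_const
      (lt_add_of_pos_right _ hη)
  obtain ⟨ρ, hρ, hρδ, hR⟩ := exists_rectangle_subset ((hN.and (hU.mem_nhds hp.1)).and hbot)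
    (show 0 < min (1 / L / 2) (η / (3 * L)) by positivity)
  have hρL : 2 * ρ < 1 / L := by linarith [hρδ.trans_le (min_le_left _ _)]
  have hρη : ρ * (3 * L) < η :=
    (lt_div_iff₀ (by positivity)).1 (hρδ.trans_le (min_le_right _ _))
  have hRU : Icc t₀ (t₀ + ρ) ×ˢ Icc (x₀ - ρ) (x₀ + ρ) ⊆ U := fun z hz => (hR hz).1.2
  have hbound := le_add_quadratic_of_subset_lipCross hL hρ hρL (abs_nonneg (N - b)) hZ hp.2
    (fun z hz => lipCross_anti hRU (hZL ⟨hRU hz.1, hz.2⟩))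
    (fun t ht x hx => hsub _ (hRU (mk_mem_prod ht hx)))
    (fun t ht x hx => husc _ (hRU (mk_mem_prod ht hx)))
    (fun t ht x hx => by linarith [(hR (mk_mem_prod ht hx)).1.1, le_abs_self (N - b)])
    (fun x hx => (hR (mk_mem_prod ⟨le_rfl, by linarith⟩ hx)).2.le)
  have hquad : ∀ᶠ z : ℝ × ℝ in 𝓝 (t₀, x₀),
      |N - b| / ρ ^ 2 * ((z.2 - x₀) ^ 2 + 2 * (z.1 - t₀)) < η :=
    (Continuous.tendsto' (by fun_prop) _ 0 (by simp)).eventually_lt_const hη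
  have hrect : Icc t₀ (t₀ + ρ) ×ˢ Icc (x₀ - ρ) (x₀ + ρ) ∈ 𝓝[Ici t₀ ×ˢ univ] (t₀, x₀) := by
    rw [nhdsWithin_prod_eq, nhdsWithin_univ]
    exact prod_mem_prod (Icc_mem_nhdsGE (by linarith)) (Icc_mem_nhds (by linarith) (by linarith))
  filter_upwards [hrect, nhdsWithin_le_nhds hquad] with z hz hzq
  have := hbound z.1 hz.1 z.2 hz.2
  simp only [b, η] at this hρη hzq ⊢
  linarith

/-- A Baire category argument: on some relatively open part of the set of bad points, `u` is
uniformly Lipschitz along coordinate lines, so these points are not bad after all. -/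
theorem rightUSCAt_of_subcaloricAt (hΩ : IsOpen Ω) (hsub : ∀ p ∈ Ω, SubcaloricAt u p.1 p.2)
    (hbdd : ∀ p ∈ Ω, IsBoundedUnder (· ≤ ·) (𝓝 p) fun z : ℝ × ℝ => u z.1 z.2) :
    ∀ p ∈ Ω, RightUSCAt u p.1 p.2 := by
  set good : Set (ℝ × ℝ) := {p | RightUSCAt u p.1 p.2}
  set bad : Set (ℝ × ℝ) := (interior good)ᶜ
  have hbad : IsClosed bad := isOpen_interior.isClosed_compl
  have hgood : ∀ z ∉ bad, RightUSCAt u z.1 z.2 := fun z hz =>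
    interior_subset (not_not.1 hz)
  have hspace : ∀ z ∈ Ω, ContinuousAt (u z.1) z.2 := fun z hz => (hsub z hz).continuousAt_space
  have htime : ∀ z ∈ Ω, ContinuousAt (fun s => u s z.2) z.1 := fun z hz =>
    (hsub z hz).choose_spec.2.continuousAt_time
  by_contra! ⟨p, hp, hpgood⟩
  have : Nonempty ↥(Ω ∩ bad) := ⟨⟨p, hp, fun h => hpgood (interior_subset h)⟩⟩
  have : LocallyCompactSpace ↥(Ω ∩ bad) :=
    (hΩ.isLocallyClosed.inter hbad.isLocallyClosed).locallyCompactSpace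
  obtain ⟨n, z, hz⟩ := nonempty_interior_of_iUnion_of_closed
    (f := fun n : ℕ => {z : ↥(Ω ∩ bad) | (z : ℝ × ℝ) ∈ lipCross u Ω (n + 1)})
    (fun n => isClosed_of_closure_subset fun z hz =>
      mem_lipCross_of_mem_closure (by positivity) hΩ hspace htime z.2.1
        (map_mem_closure continuous_subtype_val hz fun y hy => hy))
    (eq_univ_of_forall fun z => mem_iUnion.2
      ((tendsto_atTop_add_const_right _ 1 tendsto_natCast_atTop_atTop).eventually
        ((hsub z z.2.1).choose_spec.2.eventually_mem_lipCross Ω)).exists)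
  obtain ⟨V, hV, hVopen, hzV⟩ := mem_interior.1 hz
  obtain ⟨U, hU, rfl⟩ := isOpen_induced_iff.1 hVopen
  have hUgood : U ∩ Ω ⊆ good := fun y hy => by
    by_cases hybad : y ∈ bad
    · exact rightUSCAt_of_subset_lipCross (L := (n : ℝ) + 1) (by positivity) (hU.inter hΩ)
        (fun y hy => hsub y hy.2) hbad
        (fun y hy => lipCross_anti inter_subset_right (hV (a := ⟨y, hy.1.2, hy.2⟩) hy.1.1))
        (fun y _ => hgood y) ⟨hy, hybad⟩ (hbdd y hy.2)
    · exact hgood y hybad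
  exact z.2.2 (interior_maximal hUgood (hU.inter hΩ) ⟨hzV, z.2.1⟩)

theorem rightUSCAt_of_hasHeatAt {q : ℝ × ℝ → ℝ} (hΩ : IsOpen Ω)
    (hheat : ∀ p ∈ Ω, HasHeatAt u (q p) p.1 p.2)
    (hq : ∀ p ∈ Ω, IsBoundedUnder (· ≤ ·) (𝓝 p) q)
    (hbdd : ∀ p ∈ Ω, IsBoundedUnder (· ≤ ·) (𝓝 p) fun z : ℝ × ℝ => u z.1 z.2) :
    ∀ p ∈ Ω, RightUSCAt u p.1 p.2 := by
  intro p hp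
  obtain ⟨K, hK⟩ := (hq p hp).eventually_le
  obtain ⟨U, hU, hUopen, hpU⟩ := mem_nhds_iff.1 (hK.and (hΩ.mem_nhds hp))
  have hshift : RightUSCAt (fun t x => u t x + -K * t) p.1 p.2 :=
    rightUSCAt_of_subcaloricAt hUopen
      (fun z hz => ⟨_, by linarith [(hU hz).1],
        (hheat z (hU hz).2).add (hasHeatAt_const_mul_time (-K) z.1 z.2)⟩)
      (fun z hz => isBoundedUnder_le_add (hbdd z (hU hz).2)
        (Continuous.tendsto (by fun_prop) z).isBoundedUnder_le) p hpU
  simpa using hshift.sub_continuousAt (v := fun t _ => -K * t) (by fun_prop)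

end LipCross

theorem rightUSCAt_of_abs_le {u : ℝ → ℝ → ℝ} {Ω : Set (ℝ × ℝ)} {A G : ℝ × ℝ → ℝ} (hΩ : IsOpen Ω)
    (hA : ContinuousOn A Ω) (hG : ContinuousOn G Ω)
    (hheat : ∀ p ∈ Ω, HasHeatAt u (A p * u p.1 p.2) p.1 p.2)
    (hbd : ∀ p ∈ Ω, |u p.1 p.2| ≤ G p) : ∀ p ∈ Ω, RightUSCAt u p.1 p.2 := by
  have hbounded {g h : ℝ × ℝ → ℝ} (hh : ContinuousOn h Ω) (hgh : ∀ p ∈ Ω, g p ≤ h p) :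
      ∀ p ∈ Ω, IsBoundedUnder (· ≤ ·) (𝓝 p) g := fun p hp =>
    (hh.continuousAt (hΩ.mem_nhds hp)).tendsto.isBoundedUnder_le.mono_le <| by
      filter_upwards [hΩ.mem_nhds hp] with z hz using hgh z hz
  refine rightUSCAt_of_hasHeatAt hΩ hheat (hbounded (hA.abs.mul hG) fun p hp => ?_)
    (hbounded hG fun p hp => (le_abs_self _).trans (hbd p hp))
  calc A p * u p.1 p.2 ≤ |A p| * |u p.1 p.2| := (le_abs_self _).trans (abs_mul _ _).le
    _ ≤ |A p| * G p := by gcongr; exact hbd p hp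

theorem le_of_parabolic_boundary {u B A : ℝ → ℝ → ℝ} {τ T α β : ℝ}
    (hA : ∀ t ∈ Icc τ T, ∀ x ∈ Icc α β, A t x ≤ 0)
    (hu : ∀ t ∈ Icc τ T, ∀ x ∈ Icc α β, HasHeatAt u (A t x * u t x) t x)
    (husc : ∀ t ∈ Icc τ T, ∀ x ∈ Icc α β, RightUSCAt u t x)
    (hB : ∀ t ∈ Icc τ T, ∀ x ∈ Icc α β, ∃ q ≥ A t x * B t x, HasHeatAt B q t x)
    (hBcont : Continuous fun p : ℝ × ℝ => B p.1 p.2)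
    (hside : ∀ t ∈ Icc τ T, u t α ≤ B t α ∧ u t β ≤ B t β)
    (hinit : ∀ x ∈ Icc α β, u τ x ≤ B τ x) :
    ∀ t ∈ Icc τ T, ∀ x ∈ Icc α β, u t x ≤ B t x := by
  intro t ht x hx
  refine sub_nonpos.1 (nonpos_of_parabolic_boundary (v := fun t x => u t x - B t x)
    (fun t ht x hx => ?_) (fun t ht x hx => (husc t ht x hx).sub_continuousAt hBcont.continuousAt)
    (fun t ht => (hside t ht).imp sub_nonpos.2 sub_nonpos.2)
    (fun x hx => sub_nonpos.2 (hinit x hx)) (fun t ht x hx hpos => ?_) t ht x hx)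
  · obtain ⟨q, -, hBq⟩ := hB t ht x hx
    exact ((hu t ht x hx).sub hBq).continuousAt_space.continuousWithinAt
  · have hx' := Ioo_subset_Icc_self hx
    obtain ⟨q, hq, hBq⟩ := hB t ht x hx'
    exact ⟨_, by nlinarith [hA t ht x hx'], (hu t ht x hx').sub hBq⟩

/-- The comparison function on a half-line where the potential is at most `-θ²`: the first term
is the decay to be proved, the second one dominates `e^{σy}` at spatial infinity, and the third
one dominates it at the initial time. -/
def decayBarrier (θ σ σ' D δ E s y : ℝ) : ℝ :=
  D * exp (-σ' * y) + δ * exp (θ * y) + E * exp (σ * y - (θ ^ 2 - σ ^ 2) * s)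

section Decay

variable {u A : ℝ → ℝ → ℝ} {C D E R δ θ σ σ' : ℝ}

lemma continuous_decayBarrier :
    Continuous fun p : ℝ × ℝ => decayBarrier θ σ σ' D δ E p.1 p.2 := by
  unfold decayBarrier
  fun_prop

lemma exists_hasHeatAt_decayBarrier (hD : 0 ≤ D) (hσ' : |σ'| ≤ θ) (t x : ℝ) :
    ∃ q ≥ -θ ^ 2 * decayBarrier θ σ σ' D δ E t x,
      HasHeatAt (decayBarrier θ σ σ' D δ E) q t x := by
  have hfirst := (hasHeatAt_exp (-σ') 0 t x).const_mul D
  have hsecond := (hasHeatAt_exp θ 0 t x).const_mul δ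
  have hthird := (hasHeatAt_exp σ (-(θ ^ 2 - σ ^ 2)) t x).const_mul E
  simp only [zero_mul, add_zero, neg_mul (θ ^ 2 - σ ^ 2), ← sub_eq_add_neg]
    at hfirst hsecond hthird
  refine ⟨_, ?_, (hfirst.add hsecond).add hthird⟩
  have hsq : σ' ^ 2 ≤ θ ^ 2 := sq_le_sq' (abs_le.1 hσ').1 (abs_le.1 hσ').2
  have hgap : 0 ≤ (θ ^ 2 - σ' ^ 2) * (D * exp (-σ' * x)) :=
    mul_nonneg (sub_nonneg.2 hsq) (by positivity)
  unfold decayBarrier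
  linarith

lemma le_decayBarrier {τ T X : ℝ} (hC : 0 ≤ C) (hδ : 0 ≤ δ) (hσ' : |σ'| ≤ θ)
    (hA : ∀ t ∈ Icc τ T, ∀ x ∈ Icc R X, A t x ≤ -θ ^ 2)
    (hu : ∀ t ∈ Icc τ T, ∀ x ∈ Icc R X, HasHeatAt u (A t x * u t x) t x)
    (husc : ∀ t ∈ Icc τ T, ∀ x ∈ Icc R X, RightUSCAt u t x)
    (hgrowth : ∀ t ∈ Icc τ T, ∀ x ∈ Icc R X, u t x ≤ C * exp (σ * x))
    (hX : C * exp (σ * X) ≤ δ * exp (θ * X)) :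
    ∀ t ∈ Icc τ T, ∀ x ∈ Icc R X, u t x ≤
      decayBarrier θ σ σ' (C * exp ((σ + σ') * R)) δ (C * exp ((θ ^ 2 - σ ^ 2) * τ)) t x := by
  intro t ht x hx
  have hRX : R ≤ X := hx.1.trans hx.2
  have hτT : τ ≤ T := ht.1.trans ht.2
  have hD : 0 ≤ C * exp ((σ + σ') * R) := by positivity
  have hfirst (y : ℝ) : 0 ≤ C * exp ((σ + σ') * R) * exp (-σ' * y) := by positivity
  have hsecond (y : ℝ) : 0 ≤ δ * exp (θ * y) := by positivity
  have hthird (s y : ℝ) : 0 ≤ C * exp ((θ ^ 2 - σ ^ 2) * τ) *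
    exp (σ * y - (θ ^ 2 - σ ^ 2) * s) := by positivity
  refine le_of_parabolic_boundary (fun s hs y hy => (hA s hs y hy).trans (by nlinarith)) hu husc
    (fun s hs y hy => ?_) continuous_decayBarrier (fun s hs => ⟨?_, ?_⟩) (fun y hy => ?_) t ht x hx
  · obtain ⟨q, hq, hBq⟩ := exists_hasHeatAt_decayBarrier (E := C * exp ((θ ^ 2 - σ ^ 2) * τ))
      (δ := δ) (σ := σ) hD hσ' s y
    refine ⟨q, le_trans (mul_le_mul_of_nonneg_right (hA s hs y hy) ?_) hq, hBq⟩
    exact add_nonneg (add_nonneg (hfirst y) (hsecond y)) (hthird s y)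
  · have hR : C * exp ((σ + σ') * R) * exp (-σ' * R) = C * exp (σ * R) := by
      rw [mul_assoc, ← exp_add]
      ring_nf
    unfold decayBarrier
    linarith [hgrowth s hs R ⟨le_rfl, hRX⟩, hsecond R, hthird s R]
  · unfold decayBarrier
    linarith [hgrowth s hs X ⟨hRX, le_rfl⟩, hfirst X, hthird s X]
  · have hτ : C * exp ((θ ^ 2 - σ ^ 2) * τ) * exp (σ * y - (θ ^ 2 - σ ^ 2) * τ) =
        C * exp (σ * y) := by
      rw [mul_assoc, ← exp_add]
      ring_nf
    unfold decayBarrier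
    linarith [hgrowth τ ⟨le_rfl, hτT⟩ y hy, hfirst y, hsecond y]

lemma eventually_mul_exp_le_mul_exp (C : ℝ) (hδ : 0 < δ) (hσ : σ < θ) :
    ∀ᶠ X in atTop, C * exp (σ * X) ≤ δ * exp (θ * X) := by
  have hgap : Tendsto (fun X => exp ((θ - σ) * X)) atTop atTop :=
    tendsto_exp_atTop.comp (tendsto_id.const_mul_atTop (sub_pos.2 hσ))
  filter_upwards [hgap.eventually_ge_atTop (C / δ)] with X hX
  calc C * exp (σ * X) ≤ δ * exp ((θ - σ) * X) * exp (σ * X) := by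
        gcongr
        exact (div_le_iff₀' hδ).1 hX
    _ = δ * exp (θ * X) := by rw [mul_assoc, ← exp_add]; ring_nf

theorem le_exp_of_ancient (hC : 0 ≤ C) (hσ : |σ| < θ) (hσ' : |σ'| ≤ θ)
    (hA : ∀ t < 0, ∀ x ≥ R, A t x ≤ -θ ^ 2)
    (hu : ∀ t < 0, ∀ x ≥ R, HasHeatAt u (A t x * u t x) t x)
    (husc : ∀ t < 0, ∀ x ≥ R, RightUSCAt u t x)
    (hgrowth : ∀ t < 0, ∀ x ≥ R, u t x ≤ C * exp (σ * x)) :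
    ∀ t < 0, ∀ x ≥ R, u t x ≤ C * exp ((σ + σ') * R) * exp (-σ' * x) := by
  intro t ht x hx
  have hbarrier : ∀ τ ≤ t, u t x ≤ decayBarrier θ σ σ' (C * exp ((σ + σ') * R)) (exp τ)
      (C * exp ((θ ^ 2 - σ ^ 2) * τ)) t x := by
    intro τ hτ
    obtain ⟨X, hX, hxX⟩ := ((eventually_mul_exp_le_mul_exp C (exp_pos τ)
      ((le_abs_self σ).trans_lt hσ)).and (eventually_ge_atTop x)).exists
    exact le_decayBarrier hC (exp_pos τ).le hσ'
      (fun s hs y hy => hA s (hs.2.trans_lt ht) y hy.1)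
      (fun s hs y hy => hu s (hs.2.trans_lt ht) y hy.1)
      (fun s hs y hy => husc s (hs.2.trans_lt ht) y hy.1)
      (fun s hs y hy => hgrowth s (hs.2.trans_lt ht) y hy.1) hX t ⟨hτ, le_rfl⟩ x ⟨hx, hxX⟩
  have hgap : 0 < θ ^ 2 - σ ^ 2 := sub_pos.2 (sq_lt_sq' (abs_lt.1 hσ).1 (abs_lt.1 hσ).2)
  have hthird : Tendsto (fun τ => C * exp ((θ ^ 2 - σ ^ 2) * τ)) atBot (𝓝 (C * 0)) :=
    (tendsto_exp_atBot.comp (tendsto_id.const_mul_atBot hgap)).const_mul C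
  have hlim := ((tendsto_exp_atBot.mul_const (exp (θ * x))).const_add
    (C * exp ((σ + σ') * R) * exp (-σ' * x))).add
    (hthird.mul_const (exp (σ * x - (θ ^ 2 - σ ^ 2) * t)))
  simp only [mul_zero, zero_mul, add_zero] at hlim
  exact ge_of_tendsto hlim ((eventually_le_atBot t).mono hbarrier)

lemma rightUSCAt_of_ancient (hA : ContinuousOn (fun p : ℝ × ℝ => A p.1 p.2) (Iio 0 ×ˢ univ))
    (hu : ∀ t < 0, ∀ x, HasHeatAt u (A t x * u t x) t x)
    (hgrowth : ∀ t < 0, ∀ x, |u t x| ≤ C * exp (σ * |x|)) :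
    ∀ t < 0, ∀ x, RightUSCAt u t x := fun t ht x =>
  rightUSCAt_of_abs_le (p := (t, x)) (isOpen_Iio.prod isOpen_univ) hA
    (G := fun p => C * exp (σ * |p.2|)) (by fun_prop) (fun p hp => hu p.1 hp.1 p.2)
    (fun p hp => hgrowth p.1 hp.1 p.2) ⟨ht, mem_univ x⟩

lemma abs_le_exp_of_ancient_of_ge (hC : 0 ≤ C) (hσ : |σ| < θ) (hσ' : |σ'| ≤ θ) (hR : 0 ≤ R)
    (hAcont : ContinuousOn (fun p : ℝ × ℝ => A p.1 p.2) (Iio 0 ×ˢ univ))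
    (hA : ∀ t < 0, ∀ x ≥ R, A t x ≤ -θ ^ 2)
    (hu : ∀ t < 0, ∀ x, HasHeatAt u (A t x * u t x) t x)
    (hgrowth : ∀ t < 0, ∀ x, |u t x| ≤ C * exp (σ * |x|)) :
    ∀ t < 0, ∀ x ≥ R, |u t x| ≤ C * exp ((σ + σ') * R) * exp (-σ' * x) := by
  intro t ht x hx
  have hle {v : ℝ → ℝ → ℝ} (hv : ∀ t < 0, ∀ x, HasHeatAt v (A t x * v t x) t x)
      (hvu : ∀ t x, |v t x| = |u t x|) :
      v t x ≤ C * exp ((σ + σ') * R) * exp (-σ' * x) := by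
    have hvgrowth : ∀ t < 0, ∀ x, |v t x| ≤ C * exp (σ * |x|) := by simpa only [hvu] using hgrowth
    refine le_exp_of_ancient hC hσ hσ' hA (fun s hs y _ => hv s hs y)
      (fun s hs y _ => rightUSCAt_of_ancient hAcont hv hvgrowth s hs y)
      (fun s hs y hy => ?_) t ht x hx
    simpa only [abs_of_nonneg (hR.trans hy)] using (le_abs_self _).trans (hvgrowth s hs y)
  exact abs_le'.2 ⟨hle hu fun _ _ => rfl,
    hle (fun s hs y => by simpa using (hu s hs y).neg) fun _ _ => abs_neg _⟩

theorem abs_le_exp_of_ancient (hσ : |σ| < θ) (hσ' : |σ'| ≤ θ) (hsum : 0 ≤ σ + σ') (hR : 0 ≤ R)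
    (hAcont : ContinuousOn (fun p : ℝ × ℝ => A p.1 p.2) (Iio 0 ×ˢ univ))
    (hA : ∀ t < 0, ∀ x, R ≤ |x| → A t x ≤ -θ ^ 2)
    (hu : ∀ t < 0, ∀ x, HasHeatAt u (A t x * u t x) t x)
    (hgrowth : ∀ t < 0, ∀ x, |u t x| ≤ C * exp (σ * |x|)) :
    ∀ t < 0, ∀ x, |u t x| ≤ C * exp ((σ + σ') * R) * exp (-σ' * |x|) := by
  have hC : 0 ≤ C := by simpa using (abs_nonneg _).trans (hgrowth (-1) neg_one_lt_zero 0)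
  intro t ht x
  rcases le_or_gt R |x| with hx | hx
  · rcases abs_choice x with habs | habs <;> rw [habs] at hx ⊢
    · exact abs_le_exp_of_ancient_of_ge hC hσ hσ' hR hAcont
        (fun s hs y hy => hA s hs y (hy.trans (le_abs_self y))) hu hgrowth t ht x hx
    · have hreflect := abs_le_exp_of_ancient_of_ge (u := fun s y => u s (-y))
        (A := fun s y => A s (-y)) hC hσ hσ' hR
        (hAcont.comp (f := fun p : ℝ × ℝ => (p.1, -p.2)) (by fun_prop)
          fun p hp => ⟨hp.1, mem_univ _⟩)
        (fun s hs y hy => hA s hs (-y) (hy.trans (by simpa using le_abs_self y)))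
        (fun s hs y => (hu s hs (-y)).comp_neg_space)
        (fun s hs y => by simpa using hgrowth s hs (-y)) t ht (-x) hx
      simpa using hreflect
  · refine (hgrowth t ht x).trans ?_
    rw [mul_assoc, ← exp_add]
    gcongr
    nlinarith

end Decay

lemma f1_eq (v : ℝ) : f1 v = 1 - 3 * v ^ 2 := by
  have h : HasDerivAt f (1 * (1 - v ^ 2) + v * (-(2 * v))) v :=
    (hasDerivAt_id v).mul (by simpa using (hasDerivAt_pow 2 v).const_sub 1)
  rw [f1, h.deriv]
  ring

lemma f1_w_eq (s : ℝ) : f1 (w s) = 3 / cosh (s / √2) ^ 2 - 2 := by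
  have hcosh := (cosh_pos (s / √2)).ne'
  rw [f1_eq, w, tanh_eq_sinh_div_cosh, div_pow, sinh_sq]
  field_simp
  ring

lemma continuous_f1_comp_w : Continuous fun s => f1 (w s) := by
  have hcosh (s : ℝ) : cosh (s / √2) ^ 2 ≠ 0 := (pow_pos (cosh_pos _) 2).ne'
  simp only [f1_w_eq]
  fun_prop (disch := exact hcosh _)

lemma tendsto_cosh_cobounded : Tendsto cosh (cobounded ℝ) atTop := by
  have habs (r : ℝ) : |r| / 2 ≤ cosh r := by
    rw [← cosh_abs, cosh_eq]
    linarith [add_one_le_exp |r|, exp_pos (-|r|)]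
  exact tendsto_atTop_mono habs
    ((tendsto_norm_cobounded_atTop (E := ℝ)).atTop_div_const two_pos)

lemma tendsto_f1_comp_w_cobounded : Tendsto (fun s => f1 (w s)) (cobounded ℝ) (𝓝 (-2)) := by
  have hdiv : Tendsto (fun s : ℝ => s / √2) (cobounded ℝ) (cobounded ℝ) := by
    simpa only [div_eq_mul_inv] using
      tendsto_mul_right_cobounded (inv_ne_zero (sqrt_ne_zero'.2 two_pos))
  simp only [f1_w_eq]
  simpa using ((((tendsto_pow_atTop two_ne_zero).comp
    (tendsto_cosh_cobounded.comp hdiv)).const_div_atTop 3).sub_const 2)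

lemma exists_f1_comp_w_le {c : ℝ} (hc : -2 < c) (x₀ : ℝ) :
    ∃ R ≥ 0, ∀ x, R ≤ |x| → f1 (w (x + x₀)) ≤ c := by
  have h := (tendsto_f1_comp_w_cobounded.comp
    (tendsto_add_const_cobounded x₀)).eventually_le_const hc
  obtain ⟨R, -, hR⟩ := (hasBasis_cobounded_norm (E := ℝ)).eventually_iff.1 h
  exact ⟨max R 0, le_max_right _ _, fun x hx => hR ((le_max_left _ _).trans hx)⟩

/-- An ancient solution of `φ_t = φ_xx + f'(w(x+x₀))φ` which grows at most like `e^{σ|x|}`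
with `σ < √2` actually decays like `e^{-σ̃|x|}` for every `σ̃ < √2`. -/
theorem stmt_12 (x₀ σ : ℝ) (hσ : σ ∈ Set.Ioo 0 (Real.sqrt 2)) (φ : ℝ → ℝ → ℝ)
    (hreg : ∀ t ≤ (0 : ℝ), ∀ x : ℝ,
      DifferentiableAt ℝ (φ t) x ∧ DifferentiableAt ℝ (deriv (φ t)) x)
    (hpde : ∀ t ≤ (0 : ℝ), ∀ x : ℝ,
      HasDerivAt (fun s => φ s x) (deriv (deriv (φ t)) x + f1 (w (x + x₀)) * φ t x) t)
    (C : ℝ) (hC : 0 < C)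
    (hbd : ∀ t ≤ (0 : ℝ), ∀ x : ℝ, |φ t x| ≤ C * Real.exp (σ * |x|)) :
    ∀ σ' ∈ Set.Ioo (0 : ℝ) (Real.sqrt 2), ∃ C' > (0 : ℝ), ∀ t ≤ (0 : ℝ), ∀ x : ℝ,
      |φ t x| ≤ C' * Real.exp (-σ' * |x|) := by
  intro σ' hσ'
  obtain ⟨θ, hmax, hθ⟩ := exists_between (max_lt hσ.2 hσ'.2)
  have hσθ : σ < θ := (le_max_left _ _).trans_lt hmax
  have hσ'θ : σ' < θ := (le_max_right _ _).trans_lt hmax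
  have hsq : θ ^ 2 < 2 := (lt_sqrt (hσ.1.trans hσθ).le).1 hθ
  obtain ⟨R, hR, hpotential⟩ := exists_f1_comp_w_le (neg_lt_neg hsq) x₀
  have hdecay := abs_le_exp_of_ancient (A := fun _ x => f1 (w (x + x₀)))
    ((abs_of_pos hσ.1).trans_lt hσθ) ((abs_of_pos hσ'.1).trans_lt hσ'θ).le
    (add_pos hσ.1 hσ'.1).le hR
    (continuous_f1_comp_w.comp (continuous_snd.add continuous_const)).continuousOn
    (fun t _ x hx => hpotential x hx)
    (fun t ht x => ⟨deriv (φ t), _, .of_forall fun y => (hreg t ht.le y).1.hasDerivAt,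
      (hreg t ht.le x).2.hasDerivAt, hpde t ht.le x⟩)
    (fun t ht => hbd t ht.le)
  refine ⟨C * exp ((σ + σ') * R), by positivity, fun t ht x => ?_⟩
  rcases ht.lt_or_eq with hneg | rfl
  · exact hdecay t hneg x
  · have hlim : Tendsto (fun s => |φ s x|) (𝓝[<] 0) (𝓝 |φ 0 x|) :=
      ((hpde 0 le_rfl x).continuousAt.tendsto.mono_left nhdsWithin_le_nhds).abs
    exact le_of_tendsto hlim (eventually_mem_nhdsWithin.mono fun s hs => hdecay s hs x)

end
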